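/- arXiv:2104.05616 — 2 statements merged into one kernel-verified Lean document; each statement's English description precedes it below -/
import Mathlib

section
/- Let V be an integral commutative quantale (k = ⊤) and (X,a) a V-group. On the product group ℤ × X define b((z,x),(z′,x′)) = a(x,x′) if z < z′, b((z,x),(z′,x′)) = ⊤ if z = z′ and x = x′, and b((z,x),(z′,x′)) = ⊥ otherwise. Then (ℤ × X, b) is a V-group: b is reflexive, transitive (b((z,x),(z′,x′)) ⊗ b((z′,x′),(z″,x″)) ≤ b((z,x),(z″,x″))) and invariant by shifting. -/
/-!
The map `b` is the reflexive closure of the product of `<` and `a`: off the diagonal,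
`b p q` is `a p.2 q.2` cut down to `⊥` where `p.1 < q.1` fails. In a product `b p q * b q r`, a
diagonal factor is the unit and a factor `⊥` annihilates, so only `p.1 < q.1 < r.1` remains, where
the transitivity of `<` and of `a` applies. Translations preserve and reflect both `<` and `=`.
-/

theorem isQuantale_of_mul_sSup_distrib {V : Type*} [CommSemigroup V] [CompleteLattice V]
    (h : ∀ (v : V) (s : Set V), v * sSup s = ⨆ u ∈ s, v * u) : IsQuantale V where
  mul_sSup_distrib := h
  sSup_mul_distrib s v := by simp only [mul_comm _ v, h]

section StrictProd

variable {V Z X : Type*}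

open Classical in
/-- The `V`-valued relation on `Z × X` that is the reflexive closure of the product of the strict
order of `Z` with a `V`-valued relation `a` on `X`. The diagonal value is the unit of `V`, which is
`⊤` exactly when `V` is integral. -/
noncomputable def strictProd [One V] [Bot V] [LT Z] (a : X → X → V) (p q : Z × X) : V :=
  if p.1 < q.1 then a p.2 q.2 else if p = q then 1 else ⊥

theorem strictProd_of_lt [One V] [Bot V] [LT Z] (a : X → X → V) {p q : Z × X}
    (h : p.1 < q.1) : strictProd a p q = a p.2 q.2 :=
  if_pos h

theorem strictProd_self [One V] [Bot V] [Preorder Z] (a : X → X → V) (p : Z × X) :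
    strictProd a p p = 1 := by
  simp [strictProd]

theorem strictProd_of_not_lt_of_ne [One V] [Bot V] [LT Z] (a : X → X → V) {p q : Z × X}
    (hlt : ¬ p.1 < q.1) (hne : p ≠ q) : strictProd a p q = ⊥ := by
  rw [strictProd, if_neg hlt, if_neg hne]

theorem eq_strictProd [One V] [Bot V] [Preorder Z] {a : X → X → V} {b : Z × X → Z × X → V}
    (hb_lt : ∀ p q, p.1 < q.1 → b p q = a p.2 q.2) (hb_self : ∀ p, b p p = 1)
    (hb_bot : ∀ p q, ¬ p.1 < q.1 → p ≠ q → b p q = ⊥) : b = strictProd a := by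
  funext p q
  by_cases hlt : p.1 < q.1
  · rw [hb_lt p q hlt, strictProd_of_lt a hlt]
  obtain rfl | hne := eq_or_ne p q
  · rw [hb_self, strictProd_self]
  · rw [hb_bot p q hlt hne, strictProd_of_not_lt_of_ne a hlt hne]

theorem eq_or_lt_or_strictProd_eq_bot [One V] [Bot V] [LT Z] (a : X → X → V) (p q : Z × X) :
    p = q ∨ p.1 < q.1 ∨ strictProd a p q = ⊥ := by
  by_cases hlt : p.1 < q.1
  · exact .inr (.inl hlt)
  · exact (eq_or_ne p q).imp_right fun hne => .inr (strictProd_of_not_lt_of_ne a hlt hne)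

theorem strictProd_mul_strictProd_le [Monoid V] [CompleteLattice V] [IsQuantale V] [Preorder Z]
    {a : X → X → V} (ha_trans : ∀ x x' x'', a x x' * a x' x'' ≤ a x x'') (p q r : Z × X) :
    strictProd a p q * strictProd a q r ≤ strictProd a p r := by
  obtain rfl | hpq | hpq := eq_or_lt_or_strictProd_eq_bot a p q
  · rw [strictProd_self, one_mul]
  · obtain rfl | hqr | hqr := eq_or_lt_or_strictProd_eq_bot a q r
    · rw [strictProd_self, mul_one]
    · rw [strictProd_of_lt a hpq, strictProd_of_lt a hqr, strictProd_of_lt a (hpq.trans hqr)]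
      exact ha_trans p.2 q.2 r.2
    · rw [hqr, Quantale.mul_bot]
      exact bot_le
  · rw [hpq, Quantale.bot_mul]
    exact bot_le

theorem strictProd_add_right [One V] [Bot V] [Add Z] [LT Z] [IsRightCancelAdd Z]
    [AddRightStrictMono Z] [AddRightReflectLT Z] [Add X] [IsRightCancelAdd X] {a : X → X → V}
    (ha_shift : ∀ x x' x'', a x' x'' = a (x' + x) (x'' + x)) (p q r : Z × X) :
    strictProd a (q + p) (r + p) = strictProd a q r := by
  have hlt : (q + p).1 < (r + p).1 ↔ q.1 < r.1 := add_lt_add_iff_right p.1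
  have heq : q + p = r + p ↔ q = r := add_left_inj p
  classical
  exact if_congr hlt (ha_shift p.2 q.2 r.2).symm (if_congr heq rfl rfl)

theorem stmt_7_general [Monoid V] [CompleteLattice V] [IsQuantale V] [Add Z] [Preorder Z]
    [IsRightCancelAdd Z] [AddRightStrictMono Z] [AddRightReflectLT Z] [Add X] [IsRightCancelAdd X]
    {a : X → X → V} (ha_trans : ∀ x x' x'', a x x' * a x' x'' ≤ a x x'')
    (ha_shift : ∀ x x' x'', a x' x'' = a (x' + x) (x'' + x)) :
    (∀ p : Z × X, 1 ≤ strictProd a p p) ∧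
    (∀ p q r : Z × X, strictProd a p q * strictProd a q r ≤ strictProd a p r) ∧
    (∀ p q r : Z × X, strictProd a q r = strictProd a (q + p) (r + p)) :=
  ⟨fun p => (strictProd_self a p).ge, strictProd_mul_strictProd_le ha_trans,
    fun p q r => (strictProd_add_right ha_shift p q r).symm⟩

end StrictProd

theorem stmt_7 {V : Type*} [CompleteLattice V] [CommMonoid V]
    (hq : ∀ (v : V) (s : Set V), v * sSup s = ⨆ u ∈ s, v * u)
    (hint : (1 : V) = ⊤)
    {X : Type*} [AddGroup X] (a : X → X → V)
    (ha_refl : ∀ x : X, 1 ≤ a x x)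
    (ha_trans : ∀ x x' x'' : X, a x x' * a x' x'' ≤ a x x'')
    (ha_shift : ∀ x x' x'' : X, a x' x'' = a (x' + x) (x'' + x))
    (b : ℤ × X → ℤ × X → V)
    (hb_lt : ∀ p q : ℤ × X, p.1 < q.1 → b p q = a p.2 q.2)
    (hb_eq : ∀ p q : ℤ × X, p = q → b p q = ⊤)
    (hb_bot : ∀ p q : ℤ × X, ¬ p.1 < q.1 → p ≠ q → b p q = ⊥) :
    (∀ p : ℤ × X, 1 ≤ b p p) ∧
    (∀ p q r : ℤ × X, b p q * b q r ≤ b p r) ∧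
    (∀ p q r : ℤ × X, b q r = b (q + p) (r + p)) := by
  have : IsQuantale V := isQuantale_of_mul_sSup_distrib hq
  rw [eq_strictProd hb_lt (fun p => (hb_eq p p rfl).trans hint.symm) hb_bot]
  exact stmt_7_general ha_trans ha_shift
end

section
/- Let V be a commutative quantale and let (Y,b), (X,a), (Z,c) be V-groups with (Z,c) symmetric. Let N_X = {x ∈ X | k ≤ a(0,x) and k ≤ a(x,0)}, let η_X : X → X/N_X be the quotient map and ā the final structure on X/N_X (ā(w₁,w₂) = ⨆{a(x₁,x₂) | [x₁] = w₁, [x₂] = w₂}). Suppose f : (Y,b) → (X,a) is a V-homomorphism, β : (Y,b) → (Z,c) is a V-homomorphism, and α : Z → X/N_X is a group homomorphism with c(z,z′) ≤ ā(α(z),α(z′)) for all z,z′ ∈ Z, such that α ∘ β = η_X ∘ f. Then b(y,y′) ≤ a(f(y′),f(y)) for all y,y′ ∈ Y; consequently f is a V-homomorphism from (Y,b) to (X,â), where â(x,x′) = a(x,x′) ⊓ a(x′,x). -/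
/-!
By invariance under shifting, `1 ≤ a x x'` whenever `x` and `x'` lie in the same coset of `N`, so
transitivity gives `abar [x] [x'] = a x x'`: the quotient map reflects the structure. Hence
`b y y' ≤ c (β y) (β y') = c (β y') (β y) ≤ abar (α (β y')) (α (β y)) = a (f y') (f y)`.
-/

section FinalStructure

variable {V X W : Type*} [CompleteLattice V]

/-- The final `V`-structure on `W` induced by `q : X → W` from the `V`-relation `a` on `X`.
Pairs not in the image of `q × q` get the value `⊥`. -/
def finalStructure (q : X → W) (a : X → X → V) (w₁ w₂ : W) : V :=
  ⨆ x₁ : X, ⨆ x₂ : X, ⨆ (_ : q x₁ = w₁ ∧ q x₂ = w₂), a x₁ x₂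

theorem le_finalStructure (q : X → W) (a : X → X → V) (x x' : X) :
    a x x' ≤ finalStructure q a (q x) (q x') :=
  le_iSup_of_le x <| le_iSup_of_le x' <| le_iSup_of_le ⟨rfl, rfl⟩ le_rfl

theorem finalStructure_le_iff {q : X → W} {a : X → X → V} {w₁ w₂ : W} {v : V} :
    finalStructure q a w₁ w₂ ≤ v ↔ ∀ x₁ x₂, q x₁ = w₁ → q x₂ = w₂ → a x₁ x₂ ≤ v := by
  simp only [finalStructure, iSup_le_iff, and_imp]

end FinalStructure

section Transitive

variable {V X W : Type*} [Monoid V]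

theorem le_of_one_le_of_one_le_of_trans [Preorder V] [MulLeftMono V] [MulRightMono V]
    {a : X → X → V} (ha_trans : ∀ x x' x'' : X, a x x' * a x' x'' ≤ a x x'')
    {x x₁ x₂ x' : X} (hx : 1 ≤ a x x₁) (hx' : 1 ≤ a x₂ x') : a x₁ x₂ ≤ a x x' :=
  calc
    a x₁ x₂ ≤ a x x₁ * a x₁ x₂ := le_mul_of_one_le_left' hx
    _ ≤ a x x₂ := ha_trans x x₁ x₂
    _ ≤ a x x₂ * a x₂ x' := le_mul_of_one_le_right' hx'
    _ ≤ a x x' := ha_trans x x₂ x'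

theorem finalStructure_apply_apply [CompleteLattice V] [MulLeftMono V] [MulRightMono V]
    {a : X → X → V} (ha_trans : ∀ x x' x'' : X, a x x' * a x' x'' ≤ a x x'')
    {q : X → W} (hq_fiber : ∀ x x' : X, q x = q x' → 1 ≤ a x x') (x x' : X) :
    finalStructure q a (q x) (q x') = a x x' :=
  le_antisymm
    (finalStructure_le_iff.2 fun x₁ x₂ h₁ h₂ =>
      le_of_one_le_of_one_le_of_trans ha_trans (hq_fiber x x₁ h₁.symm) (hq_fiber x₂ x' h₂))
    (le_finalStructure q a x x')

end Transitive

theorem one_le_of_mk_eq_mk {V X : Type*} [LE V] [One V] [AddGroup X] {a : X → X → V}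
    (ha_shift : ∀ x x' x'' : X, a x' x'' = a (x' + x) (x'' + x))
    {N : AddSubgroup X} [N.Normal] (hN : ∀ x ∈ N, 1 ≤ a 0 x) {x x' : X}
    (h : (QuotientAddGroup.mk x : X ⧸ N) = QuotientAddGroup.mk x') : 1 ≤ a x x' := by
  have h_mem : x' - x ∈ N := QuotientAddGroup.eq_iff_sub_mem.1 h.symm
  have h_translate : a 0 (x' - x) = a x x' := by simpa using ha_shift x 0 (x' - x)
  exact h_translate ▸ hN _ h_mem

theorem isQuantale_of_mul_sSup {V : Type*} [CompleteLattice V] [CommSemigroup V]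
    (h : ∀ (v : V) (s : Set V), v * sSup s = ⨆ u ∈ s, v * u) : IsQuantale V where
  mul_sSup_distrib := h
  sSup_mul_distrib s v := by simpa only [mul_comm] using h v s

theorem stmt_15_general {V Y X Z W : Type*} [CompleteLattice V] [Monoid V]
    [MulLeftMono V] [MulRightMono V]
    (b : Y → Y → V) (a : X → X → V) (c : Z → Z → V)
    (ha_trans : ∀ x x' x'' : X, a x x' * a x' x'' ≤ a x x'')
    (hcsym : ∀ z z' : Z, c z z' = c z' z)
    (q : X → W) (hq_fiber : ∀ x x' : X, q x = q x' → 1 ≤ a x x')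
    (f : Y → X) (hf : ∀ y y' : Y, b y y' ≤ a (f y) (f y'))
    (β : Y → Z) (hβ : ∀ y y' : Y, b y y' ≤ c (β y) (β y'))
    (α : Z → W) (hα : ∀ z z' : Z, c z z' ≤ finalStructure q a (α z) (α z'))
    (hcomm : ∀ y : Y, α (β y) = q (f y)) :
    (∀ y y' : Y, b y y' ≤ a (f y') (f y)) ∧
    (∀ y y' : Y, b y y' ≤ a (f y) (f y') ⊓ a (f y') (f y)) := by
  have b_le_swap (y y' : Y) : b y y' ≤ a (f y') (f y) :=
    calc
      b y y' ≤ c (β y) (β y') := hβ y y'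
      _ = c (β y') (β y) := hcsym _ _
      _ ≤ finalStructure q a (α (β y')) (α (β y)) := hα _ _
      _ = finalStructure q a (q (f y')) (q (f y)) := by rw [hcomm, hcomm]
      _ = a (f y') (f y) := finalStructure_apply_apply ha_trans hq_fiber _ _
  exact ⟨b_le_swap, fun y y' => le_inf (hf y y') (b_le_swap y y')⟩

theorem stmt_15 {V : Type*} [CompleteLattice V] [CommMonoid V]
    (hq : ∀ (v : V) (s : Set V), v * sSup s = ⨆ u ∈ s, v * u)
    {Y X Z : Type*} [AddGroup Y] [AddGroup X] [AddGroup Z]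
    (b : Y → Y → V) (a : X → X → V) (c : Z → Z → V)
    (hb_refl : ∀ x : Y, 1 ≤ b x x)
    (hb_trans : ∀ x x' x'' : Y, b x x' * b x' x'' ≤ b x x'')
    (hb_shift : ∀ x x' x'' : Y, b x' x'' = b (x' + x) (x'' + x))
    (ha_refl : ∀ x : X, 1 ≤ a x x)
    (ha_trans : ∀ x x' x'' : X, a x x' * a x' x'' ≤ a x x'')
    (ha_shift : ∀ x x' x'' : X, a x' x'' = a (x' + x) (x'' + x))
    (hc_refl : ∀ x : Z, 1 ≤ c x x)
    (hc_trans : ∀ x x' x'' : Z, c x x' * c x' x'' ≤ c x x'')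
    (hc_shift : ∀ x x' x'' : Z, c x' x'' = c (x' + x) (x'' + x))
    (hcsym : ∀ z z' : Z, c z z' = c z' z)
    (N : AddSubgroup X) [N.Normal]
    (hN : (N : Set X) = {x : X | 1 ≤ a 0 x ∧ 1 ≤ a x 0})
    (abar : X ⧸ N → X ⧸ N → V)
    (habar : ∀ w₁ w₂ : X ⧸ N, abar w₁ w₂ =
      ⨆ x₁ : X, ⨆ x₂ : X,
        ⨆ (_ : (QuotientAddGroup.mk x₁ : X ⧸ N) = w₁ ∧ (QuotientAddGroup.mk x₂ : X ⧸ N) = w₂),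
          a x₁ x₂)
    (f : Y →+ X) (hf : ∀ y y' : Y, b y y' ≤ a (f y) (f y'))
    (β : Y →+ Z) (hβ : ∀ y y' : Y, b y y' ≤ c (β y) (β y'))
    (α : Z →+ X ⧸ N) (hα : ∀ z z' : Z, c z z' ≤ abar (α z) (α z'))
    (hcomm : ∀ y : Y, α (β y) = QuotientAddGroup.mk (f y)) :
    (∀ y y' : Y, b y y' ≤ a (f y') (f y)) ∧
    (∀ y y' : Y, b y y' ≤ a (f y) (f y') ⊓ a (f y') (f y)) := by
  have : IsQuantale V := isQuantale_of_mul_sSup hq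
  obtain rfl : abar = finalStructure QuotientAddGroup.mk a := funext₂ habar
  have one_le_of_mem (x : X) (hx : x ∈ N) : 1 ≤ a 0 x := (hN.subset hx).1
  exact stmt_15_general b a c ha_trans hcsym _
    (fun _ _ => one_le_of_mk_eq_mk ha_shift one_le_of_mem) f hf β hβ α hα hcomm
end
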